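/- arXiv:2511.20929 — 2 statements merged into one kernel-verified Lean document; each statement's English description precedes it below -/
import Mathlib

section
/- Let μ be a DNS satisfaction function and let ε > 0 be such that μ(t) > ε for every cost t > 0. Then for every integer n ≥ 3 and every budget b > 0 there exists a PB instance with n voters and budget b such that the outcome of Greedy_μ has utilitarian ratio at most 1/(n−1) with respect to μ, and moreover every feasible outcome of that instance satisfying EJR1_μ has utilitarian ratio at most 1/(n−1) with respect to μ. -/
open Finset
open scoped Classical

noncomputable section

/-- A participatory budgeting (PB) instance. -/
structure PB (π ν : Type) where
  projs : Finset π
  voters : Finset ν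
  approves : ν → Finset π
  cost : π → ℝ
  budget : ℝ
  projs_nonempty : projs.Nonempty
  budget_pos : 0 < budget
  cost_pos : ∀ p ∈ projs, 0 < cost p
  cost_le_budget : ∀ p ∈ projs, cost p ≤ budget
  approves_subset : ∀ i ∈ voters, approves i ⊆ projs

/-- A satisfaction function assigns a positive value to each positive cost. -/
def IsSat (μ : ℝ → ℝ) : Prop := ∀ t : ℝ, 0 < t → 0 < μ t

/-- A DNS function: weakly increasing, with weakly decreasing satisfaction per unit cost. -/
def IsDNS (μ : ℝ → ℝ) : Prop :=
  IsSat μ ∧ (∀ s t : ℝ, 0 < s → s ≤ t → μ s ≤ μ t) ∧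
    (∀ s t : ℝ, 0 < s → s ≤ t → μ t / t ≤ μ s / s)

namespace PB

variable {π ν : Type}

/-- Supporters of a project. -/
def supp (I : PB π ν) (p : π) : Finset ν := I.voters.filter (fun i => p ∈ I.approves i)

/-- Total cost of a set of projects. -/
def costOf (I : PB π ν) (S : Finset π) : ℝ := ∑ p ∈ S, I.cost p

/-- A feasible outcome. -/
def feasibleSet (I : PB π ν) (S : Finset π) : Prop := S ⊆ I.projs ∧ I.costOf S ≤ I.budget

/-- Minimum project cost. -/
def cmin (I : PB π ν) : ℝ := I.projs.inf' I.projs_nonempty I.cost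

/-- Maximum project cost. -/
def cmax (I : PB π ν) : ℝ := I.projs.sup' I.projs_nonempty I.cost

/-- Utilitarian welfare of a set of projects. -/
def uw (I : PB π ν) (μ : ℝ → ℝ) (S : Finset π) : ℝ :=
  ∑ p ∈ S, ((I.supp p).card : ℝ) * μ (I.cost p)

/-- The value ("bang per buck") of a project. -/
def projVal (I : PB π ν) (μ : ℝ → ℝ) (p : π) : ℝ :=
  ((I.supp p).card : ℝ) * μ (I.cost p) / I.cost p

/-- Satisfaction of voter `i` from an outcome. -/
def satOf (I : PB π ν) (μ : ℝ → ℝ) (i : ν) (S : Finset π) : ℝ :=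
  ∑ p ∈ S ∩ I.approves i, μ (I.cost p)

/-- Minimum satisfaction of a project in the instance. -/
def muMin (I : PB π ν) (μ : ℝ → ℝ) : ℝ :=
  I.projs.inf' I.projs_nonempty (fun p => μ (I.cost p))

/-- Maximum satisfaction of a project in the instance. -/
def muMax (I : PB π ν) (μ : ℝ → ℝ) : ℝ :=
  I.projs.sup' I.projs_nonempty (fun p => μ (I.cost p))

/-- The maximal utilitarian welfare over feasible outcomes. -/
def maxUW (I : PB π ν) (μ : ℝ → ℝ) : ℝ :=
  (I.projs.powerset.filter (fun S => I.costOf S ≤ I.budget)).sup'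
    ⟨∅, Finset.mem_filter.mpr ⟨Finset.empty_mem_powerset _,
      by simpa [PB.costOf] using I.budget_pos.le⟩⟩
    (I.uw μ)

/-- A group `N'` is `T`-cohesive. -/
def cohesive (I : PB π ν) (N' : Finset ν) (T : Finset π) : Prop :=
  N' ⊆ I.voters ∧ T ⊆ I.projs ∧ (∀ i ∈ N', T ⊆ I.approves i) ∧
    I.costOf T ≤ ((N'.card : ℝ) / (I.voters.card : ℝ)) * I.budget

/-- Extended justified representation up to one project w.r.t. `μ`. -/
def EJR1 (I : PB π ν) (μ : ℝ → ℝ) (W : Finset π) : Prop :=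
  ∀ N' T, I.cohesive N' T →
    T ⊆ W ∨ ∃ i ∈ N', ∃ p ∈ I.approves i, p ∉ W ∧
      I.satOf μ i W + μ (I.cost p) > I.satOf μ i T

/-- Pick the element of maximal `f`-value, breaking ties by the linear order. -/
def pickMax [LinearOrder π] (f : π → ℝ) (S : Finset π) (h : S.Nonempty) : π :=
  (S.filter (fun p => ∀ q ∈ S, f q ≤ f p)).min' (by
    obtain ⟨p, hp, hm⟩ := S.exists_max_image f h
    exact ⟨p, Finset.mem_filter.mpr ⟨hp, hm⟩⟩)

/-- Pick the element of minimal `f`-value, breaking ties by the linear order. -/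
def pickMin [LinearOrder π] (f : π → ℝ) (S : Finset π) (h : S.Nonempty) : π :=
  (S.filter (fun p => ∀ q ∈ S, f p ≤ f q)).min' (by
    obtain ⟨p, hp, hm⟩ := S.exists_min_image f h
    exact ⟨p, Finset.mem_filter.mpr ⟨hp, hm⟩⟩)

section Greedy

variable [LinearOrder π]

/-- One choice of the greedy rule: among the unchosen affordable projects, the one of
maximum value (ties broken by the linear order); `none` if no project is affordable. -/
def greedyStep (I : PB π ν) (μ : ℝ → ℝ) (rem : Finset π) (budg : ℝ) : Option π :=
  if h : (rem.filter (fun p => I.cost p ≤ budg)).Nonempty then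
    some (pickMax (I.projVal μ) (rem.filter (fun p => I.cost p ≤ budg)) h)
  else none

/-- The (ordered) list of projects chosen by the greedy rule, with fuel. -/
def greedyAux (I : PB π ν) (μ : ℝ → ℝ) : ℕ → Finset π → ℝ → List π
  | 0, _, _ => []
  | (k+1), rem, budg =>
    match I.greedyStep μ rem budg with
    | none => []
    | some p => p :: greedyAux I μ k (rem.erase p) (budg - I.cost p)

/-- The projects chosen by `Greedy_μ`, in order of selection. -/
def greedySeq (I : PB π ν) (μ : ℝ → ℝ) : List π :=
  greedyAux I μ I.projs.card I.projs I.budget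

/-- The outcome of the greedy rule started from a set `rem` of unchosen projects
with remaining budget `budg`. -/
def greedyFrom (I : PB π ν) (μ : ℝ → ℝ) (rem : Finset π) (budg : ℝ) : Finset π :=
  (greedyAux I μ rem.card rem budg).toFinset

/-- The outcome of `Greedy_μ`. -/
def greedy (I : PB π ν) (μ : ℝ → ℝ) : Finset π := (I.greedySeq μ).toFinset

/-- The state (unchosen projects, remaining budget) of `Greedy_μ` after `k` stages. -/
def greedyStateAux (I : PB π ν) (μ : ℝ → ℝ) : ℕ → Finset π × ℝ
  | 0 => (I.projs, I.budget)
  | (k+1) =>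
    match I.greedyStep μ (greedyStateAux I μ k).1 (greedyStateAux I μ k).2 with
    | none => greedyStateAux I μ k
    | some p => ((greedyStateAux I μ k).1.erase p, (greedyStateAux I μ k).2 - I.cost p)

/-- The project chosen by `Greedy_μ` at stage `k+1` (i.e. after `k` stages), if any. -/
def greedyChoice (I : PB π ν) (μ : ℝ → ℝ) (k : ℕ) : Option π :=
  I.greedyStep μ (I.greedyStateAux μ k).1 (I.greedyStateAux μ k).2

end Greedy

section MES

variable [LinearOrder π]

/-- The set of values `ρ ≥ 0` at which project `p` can be bought given voter budgets `bud`. -/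
def rhoSet (I : PB π ν) (μ : ℝ → ℝ) (bud : ν → ℝ) (p : π) : Set ℝ :=
  {ρ : ℝ | 0 ≤ ρ ∧ ∑ i ∈ I.supp p, min (bud i) (ρ * μ (I.cost p)) = I.cost p}

/-- `ρ(p)`: the least `ρ ≥ 0` at which `p` can be bought (junk value if none exists). -/
def rho (I : PB π ν) (μ : ℝ → ℝ) (bud : ν → ℝ) (p : π) : ℝ := sInf (I.rhoSet μ bud p)

/-- One choice of MES: among the unchosen projects with `ρ(p) < ∞`, one minimizing `ρ(p)`
(ties broken by the linear order); `none` if no project can be bought. -/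
def mesStep (I : PB π ν) (μ : ℝ → ℝ) (rem : Finset π) (bud : ν → ℝ) : Option π :=
  if h : (rem.filter (fun p => (I.rhoSet μ bud p).Nonempty)).Nonempty then
    some (pickMin (I.rho μ bud) (rem.filter (fun p => (I.rhoSet μ bud p).Nonempty)) h)
  else none

/-- Voter budgets after the supporters of `p` pay for it. -/
def mesPay (I : PB π ν) (μ : ℝ → ℝ) (bud : ν → ℝ) (p : π) : ν → ℝ :=
  fun i => if i ∈ I.supp p then bud i - min (bud i) (I.rho μ bud p * μ (I.cost p)) else bud i

/-- The state (unchosen projects, voter budgets) of `MES_μ` after `k` stages. -/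
def mesStateAux (I : PB π ν) (μ : ℝ → ℝ) : ℕ → Finset π × (ν → ℝ)
  | 0 => (I.projs, fun _ => I.budget / (I.voters.card : ℝ))
  | (k+1) =>
    match I.mesStep μ (mesStateAux I μ k).1 (mesStateAux I μ k).2 with
    | none => mesStateAux I μ k
    | some p => ((mesStateAux I μ k).1.erase p, I.mesPay μ (mesStateAux I μ k).2 p)

/-- The project chosen by `MES_μ` at stage `k+1` (i.e. after `k` stages), if any. -/
def mesChoice (I : PB π ν) (μ : ℝ → ℝ) (k : ℕ) : Option π :=
  I.mesStep μ (I.mesStateAux μ k).1 (I.mesStateAux μ k).2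

/-- The final state of `MES_μ`. -/
def mesFinal (I : PB π ν) (μ : ℝ → ℝ) : Finset π × (ν → ℝ) :=
  I.mesStateAux μ I.projs.card

/-- The outcome of `MES_μ`. -/
def mesOutcome (I : PB π ν) (μ : ℝ → ℝ) : Finset π := I.projs \ (I.mesFinal μ).1

/-- The outcome of `MES_μ` completed by `Greedy_μ`: run MES, then greedy on the unchosen
projects with the remaining total budget. -/
def completedMES (I : PB π ν) (μ : ℝ → ℝ) : Finset π :=
  I.mesOutcome μ ∪
    I.greedyFrom μ (I.mesFinal μ).1 (I.budget - I.costOf (I.mesOutcome μ))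

/-- Voter `i` is budget-limited for project `p` after `k` stages of `MES_μ`:
`p` is unchosen and approved by `i`, affordable from the total remaining budget,
but an equal split of its cost exceeds `i`'s personal budget. -/
def budgetLimitedAt (I : PB π ν) (μ : ℝ → ℝ) (k : ℕ) (i : ν) (p : π) : Prop :=
  i ∈ I.voters ∧ p ∈ (I.mesStateAux μ k).1 ∧ p ∈ I.approves i ∧
    I.cost p ≤ ∑ j ∈ I.voters, (I.mesStateAux μ k).2 j ∧
    (I.mesStateAux μ k).2 i < I.cost p / ((I.supp p).card : ℝ)

end MES

/-- Total cost of a list of projects. -/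
def listCost (I : PB π ν) (L : List π) : ℝ := (L.map I.cost).sum

/-- Total utilitarian welfare of a list of projects. -/
def listUW (I : PB π ν) (μ : ℝ → ℝ) (L : List π) : ℝ :=
  (L.map (fun p => ((I.supp p).card : ℝ) * μ (I.cost p))).sum

end PB

/-!
Give one voter a private project `p` of tiny cost `δ`, and let all the others approve only a project
`q` that costs the whole budget. Only one of the two can be funded. Since `μ(t)/t` is unbounded as
`t → 0`, a suitable `δ` makes `p` the project of highest value, so Greedy buys it; and once
`δ ≤ b/n`, the single supporter of `p` is a cohesive group, so EJR1 forces `p` as well. The welfare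
`μ(δ)` of `{p}` is at most the satisfaction `μ(b)` that each of the other `n - 1` voters gets
from `{q}`.
-/

namespace PB

variable {π ν : Type} {I : PB π ν} {μ : ℝ → ℝ}

theorem mem_supp {i : ν} {p : π} : i ∈ I.supp p ↔ i ∈ I.voters ∧ p ∈ I.approves i := mem_filter

theorem uw_le_maxUW {S : Finset π} (hS : I.feasibleSet S) : I.uw μ S ≤ I.maxUW μ :=
  le_sup' (I.uw μ) (mem_filter.mpr ⟨mem_powerset.mpr hS.1, hS.2⟩)

theorem uw_singleton (p : π) : I.uw μ {p} = (I.supp p).card * μ (I.cost p) :=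
  sum_singleton _ _

theorem feasibleSet_singleton {p : π} (hp : p ∈ I.projs) : I.feasibleSet {p} :=
  ⟨singleton_subset_iff.mpr hp, (sum_singleton _ _).trans_le (I.cost_le_budget p hp)⟩

theorem EJR1.mem_of_approves_eq_singleton {W : Finset π} (hW : I.EJR1 μ W) {i : ν} {p : π}
    (hi : i ∈ I.voters) (hip : I.approves i = {p}) (hp : I.cost p ≤ I.budget / I.voters.card) :
    p ∈ W := by
  have hcohesive : I.cohesive {i} {p} := by
    refine ⟨singleton_subset_iff.mpr hi, hip ▸ I.approves_subset i hi, ?_, ?_⟩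
    · simp only [mem_singleton, forall_eq, hip, Subset.refl]
    · simpa [costOf, ← div_eq_inv_mul] using hp
  rcases hW _ _ hcohesive with hsub | ⟨j, hj, r, hr, hrW, hgt⟩
  · exact singleton_subset_iff.mp hsub
  · obtain rfl := mem_singleton.mp hj
    obtain rfl : r = p := by simpa [hip] using hr
    simp [satOf, hip, hrW] at hgt

/-- Project `p` is exclusive if the budget does not allow funding any other project with it. -/
def IsExclusive (I : PB π ν) (p : π) : Prop :=
  p ∈ I.projs ∧ ∀ q ∈ I.projs, q ≠ p → I.budget < I.cost p + I.cost q

theorem IsExclusive.eq_singleton {p : π} (hp : I.IsExclusive p) {W : Finset π}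
    (hW : I.feasibleSet W) (hpW : p ∈ W) : W = {p} := by
  refine eq_singleton_iff_unique_mem.mpr ⟨hpW, fun q hq => by_contra fun hqp => ?_⟩
  have hpair : I.cost p + I.cost q ≤ I.costOf W :=
    add_le_sum (fun r hr => (I.cost_pos r (hW.1 hr)).le) hpW hq (Ne.symm hqp)
  exact (hp.2 q (hW.1 hq) hqp).not_ge (hpair.trans hW.2)

section Greedy

variable [LinearOrder π]

theorem pickMax_mem_filter (f : π → ℝ) {S : Finset π} (h : S.Nonempty) :
    pickMax f S h ∈ S.filter (fun p => ∀ q ∈ S, f q ≤ f p) :=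
  min'_mem _ _

theorem pickMax_eq_of_forall_lt {f : π → ℝ} {S : Finset π} (h : S.Nonempty) {p : π} (hp : p ∈ S)
    (hlt : ∀ q ∈ S, q ≠ p → f q < f p) : pickMax f S h = p := by
  obtain ⟨hmem, hmax⟩ := mem_filter.mp (pickMax_mem_filter f h)
  exact by_contra fun hne => (hlt _ hmem hne).not_ge (hmax p hp)

theorem greedyStep_eq_some_of_forall_lt {rem : Finset π} {budg : ℝ} {p : π} (hp : p ∈ rem)
    (hcost : I.cost p ≤ budg) (hlt : ∀ q ∈ rem, q ≠ p → I.projVal μ q < I.projVal μ p) :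
    I.greedyStep μ rem budg = some p := by
  have hmem : p ∈ rem.filter (fun q => I.cost q ≤ budg) := mem_filter.mpr ⟨hp, hcost⟩
  have hne : (rem.filter (fun q => I.cost q ≤ budg)).Nonempty := ⟨p, hmem⟩
  rw [greedyStep, dif_pos hne,
    pickMax_eq_of_forall_lt hne hmem fun q hq => hlt q (mem_filter.mp hq).1]

theorem greedyStep_eq_none_of_forall_lt {rem : Finset π} {budg : ℝ}
    (h : ∀ p ∈ rem, budg < I.cost p) : I.greedyStep μ rem budg = none :=
  dif_neg <| not_nonempty_iff_eq_empty.mpr <| filter_eq_empty_iff.mpr fun p hp => (h p hp).not_ge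

theorem greedyAux_eq_nil_of_forall_lt {rem : Finset π} {budg : ℝ}
    (h : ∀ p ∈ rem, budg < I.cost p) (k : ℕ) : I.greedyAux μ k rem budg = [] := by
  cases k with
  | zero => rfl
  | succ k => rw [greedyAux, greedyStep_eq_none_of_forall_lt h]

theorem IsExclusive.greedy_eq_singleton {p : π} (hp : I.IsExclusive p)
    (hval : ∀ q ∈ I.projs, q ≠ p → I.projVal μ q < I.projVal μ p) : I.greedy μ = {p} := by
  have hfirst : I.greedyStep μ I.projs I.budget = some p :=
    greedyStep_eq_some_of_forall_lt hp.1 (I.cost_le_budget p hp.1) hval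
  have hrest (k : ℕ) : I.greedyAux μ k (I.projs.erase p) (I.budget - I.cost p) = [] := by
    refine greedyAux_eq_nil_of_forall_lt (fun q hq => ?_) k
    obtain ⟨hqp, hq⟩ := mem_erase.mp hq
    exact sub_left_lt_of_lt_add (hp.2 q hq hqp)
  obtain ⟨k, hk⟩ := Nat.exists_eq_succ_of_ne_zero (card_ne_zero_of_mem hp.1)
  simp [greedy, greedySeq, hk, greedyAux, hfirst, hrest]

end Greedy

section LoneVoter

variable {N : Finset ν} {i : ν} {p q : π} {b δ : ℝ}

/-- The instance with voters `N` and budget `b` in which voter `i` approves only project `p`,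
of cost `δ`, and every other voter approves only project `q`, which costs the whole budget.
It is meant for `i ∈ N` and `p ≠ q`. -/
def loneVoter (N : Finset ν) (i : ν) (p q : π) (hδ : 0 < δ) (hδb : δ ≤ b) : PB π ν where
  projs := {p, q}
  voters := N
  approves j := if j = i then {p} else {q}
  cost r := if r = q then b else δ
  budget := b
  projs_nonempty := insert_nonempty _ _
  budget_pos := hδ.trans_le hδb
  cost_pos r _ := by split_ifs <;> linarith
  cost_le_budget r _ := by split_ifs <;> linarith
  approves_subset j _ := by split_ifs <;> simp

variable {hδ : 0 < δ} {hδb : δ ≤ b}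

theorem loneVoter_cost_left (hpq : p ≠ q) : (loneVoter N i p q hδ hδb).cost p = δ := if_neg hpq

theorem loneVoter_cost_right : (loneVoter N i p q hδ hδb).cost q = b := if_pos rfl

theorem loneVoter_approves_self : (loneVoter N i p q hδ hδb).approves i = {p} := if_pos rfl

theorem loneVoter_supp_left (hi : i ∈ N) (hpq : p ≠ q) :
    (loneVoter N i p q hδ hδb).supp p = {i} := by
  ext j
  by_cases hj : j = i <;> simp [mem_supp, loneVoter, hj, hi, hpq]

theorem loneVoter_supp_right (hpq : p ≠ q) :
    (loneVoter N i p q hδ hδb).supp q = N.erase i := by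
  ext j
  by_cases hj : j = i <;> simp [mem_supp, loneVoter, hj, hpq.symm]

theorem loneVoter_card_supp_right (hi : i ∈ N) (hpq : p ≠ q) :
    (((loneVoter N i p q hδ hδb).supp q).card : ℝ) = N.card - 1 := by
  rw [loneVoter_supp_right hpq, cast_card_erase_of_mem hi]

theorem loneVoter_eq_right_of_ne {r : π} (hr : r ∈ (loneVoter N i p q hδ hδb).projs)
    (hrp : r ≠ p) : r = q :=
  mem_singleton.mp ((mem_insert.mp hr).resolve_left hrp)

theorem loneVoter_isExclusive (hpq : p ≠ q) : (loneVoter N i p q hδ hδb).IsExclusive p := by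
  refine ⟨mem_insert_self _ _, fun r hr hrp => ?_⟩
  obtain rfl := loneVoter_eq_right_of_ne hr hrp
  rw [loneVoter_cost_left hpq, loneVoter_cost_right]
  exact lt_add_of_pos_left b hδ

theorem loneVoter_projVal_lt (hi : i ∈ N) (hpq : p ≠ q)
    (hval : ((N.card : ℝ) - 1) * μ b / b < μ δ / δ) :
    ∀ r ∈ (loneVoter N i p q hδ hδb).projs, r ≠ p →
      (loneVoter N i p q hδ hδb).projVal μ r < (loneVoter N i p q hδ hδb).projVal μ p := by
  intro r hr hrp
  obtain rfl := loneVoter_eq_right_of_ne hr hrp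
  simpa only [projVal, loneVoter_cost_left hpq, loneVoter_cost_right, loneVoter_supp_left hi hpq,
    loneVoter_card_supp_right hi hpq, card_singleton, Nat.cast_one, one_mul] using hval

theorem loneVoter_uw_left_le (hi : i ∈ N) (hpq : p ≠ q) (hN : 1 < N.card) (hμ : μ δ ≤ μ b) :
    (loneVoter N i p q hδ hδb).uw μ {p} ≤
      1 / ((N.card : ℝ) - 1) * (loneVoter N i p q hδ hδb).maxUW μ := by
  have hpos : (0 : ℝ) < N.card - 1 := sub_pos.mpr (mod_cast hN)
  have huw_left : (loneVoter N i p q hδ hδb).uw μ {p} = μ δ := by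
    rw [uw_singleton, loneVoter_supp_left hi hpq, loneVoter_cost_left hpq, card_singleton,
      Nat.cast_one, one_mul]
  have huw_right : (loneVoter N i p q hδ hδb).uw μ {q} = ((N.card : ℝ) - 1) * μ b := by
    rw [uw_singleton, loneVoter_card_supp_right hi hpq, loneVoter_cost_right]
  have hq : q ∈ (loneVoter N i p q hδ hδb).projs := mem_insert_of_mem (mem_singleton_self q)
  rw [one_div_mul_eq_div, le_div_iff₀' hpos]
  calc ((N.card : ℝ) - 1) * (loneVoter N i p q hδ hδb).uw μ {p}
      = ((N.card : ℝ) - 1) * μ δ := by rw [huw_left]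
    _ ≤ ((N.card : ℝ) - 1) * μ b := by gcongr
    _ = (loneVoter N i p q hδ hδb).uw μ {q} := huw_right.symm
    _ ≤ (loneVoter N i p q hδ hδb).maxUW μ := uw_le_maxUW (feasibleSet_singleton hq)

end LoneVoter

end PB

open Filter Topology in
theorem tendsto_div_self_nhdsGT_zero_atTop {μ : ℝ → ℝ} {ε : ℝ} (hε : 0 < ε)
    (hlb : ∀ t : ℝ, 0 < t → ε ≤ μ t) : Tendsto (fun t => μ t / t) (𝓝[>] 0) atTop := by
  refine tendsto_atTop_mono' _ ?_ (tendsto_inv_nhdsGT_zero.const_mul_atTop hε)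
  filter_upwards [self_mem_nhdsWithin] with t ht
  rw [div_eq_mul_inv]
  exact mul_le_mul_of_nonneg_right (hlb t ht) (inv_nonneg.mpr (le_of_lt ht))

open Filter Topology in
theorem greedy_and_prop_ratio_le_inv_pred_general {π ν : Type} [LinearOrder π] [Nontrivial π]
    {μ : ℝ → ℝ} (hmono : MonotoneOn μ (Set.Ioi 0))
    (hunbdd : ∀ C : ℝ, ∃ᶠ t in 𝓝[>] 0, C < μ t / t)
    {N : Finset ν} (hN : 1 < N.card) {b : ℝ} (hb : 0 < b) :
    ∃ I : PB π ν, I.voters = N ∧ I.budget = b ∧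
      I.uw μ (I.greedy μ) ≤ (1 / ((N.card : ℝ) - 1)) * I.maxUW μ ∧
      ∀ W : Finset π, I.feasibleSet W → I.EJR1 μ W →
        I.uw μ W ≤ (1 / ((N.card : ℝ) - 1)) * I.maxUW μ := by
  obtain ⟨p, q, hpq⟩ := exists_pair_ne π
  obtain ⟨i, hi⟩ := card_pos.mp (zero_lt_one.trans hN)
  have hshare : 0 < b / N.card := div_pos hb (mod_cast zero_lt_one.trans hN)
  obtain ⟨δ, hval, hδ, hδN⟩ :=
    ((hunbdd (((N.card : ℝ) - 1) * μ b / b)).and_eventually (Ioc_mem_nhdsGT hshare)).exists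
  have hδb : δ ≤ b := hδN.trans (div_le_self hb.le (mod_cast hN.le))
  have hexcl : (PB.loneVoter N i p q hδ hδb).IsExclusive p := PB.loneVoter_isExclusive hpq
  have hratio := PB.loneVoter_uw_left_le (hδ := hδ) (hδb := hδb) hi hpq hN (hmono hδ hb hδb)
  refine ⟨PB.loneVoter N i p q hδ hδb, rfl, rfl, ?_, fun W hW hEJR => ?_⟩
  · rwa [hexcl.greedy_eq_singleton (PB.loneVoter_projVal_lt hi hpq hval)]
  · have hpW : p ∈ W := hEJR.mem_of_approves_eq_singleton hi PB.loneVoter_approves_self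
      ((PB.loneVoter_cost_left hpq).trans_le hδN)
    rwa [hexcl.eq_singleton hW hpW]

/-- For a DNS satisfaction function bounded below by `ε > 0`, for every `n ≥ 3`
and budget `b > 0` there is an instance on which both Greedy and every feasible EJR1 outcome
have utilitarian ratio at most `1/(n-1)`. -/
theorem greedy_and_prop_ratio_le_inv_pred (μ : ℝ → ℝ) (hDNS : IsDNS μ)
    (ε : ℝ) (hε : 0 < ε) (hlb : ∀ t : ℝ, 0 < t → ε < μ t) :
    ∀ n : ℕ, 3 ≤ n → ∀ b : ℝ, 0 < b →
      ∃ I : PB ℕ ℕ, I.voters.card = n ∧ I.budget = b ∧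
        I.uw μ (I.greedy μ) ≤ (1 / ((n : ℝ) - 1)) * I.maxUW μ ∧
        ∀ W : Finset ℕ, I.feasibleSet W → I.EJR1 μ W →
          I.uw μ W ≤ (1 / ((n : ℝ) - 1)) * I.maxUW μ := by
  intro n hn b hb
  have htop := tendsto_div_self_nhdsGT_zero_atTop hε fun t ht => (hlb t ht).le
  obtain ⟨I, hvoters, hI⟩ := greedy_and_prop_ratio_le_inv_pred_general (π := ℕ)
    (fun s hs t _ hst => hDNS.2.1 s t hs hst) (fun C => (htop.eventually_gt_atTop C).frequently)
    (N := range n) (by rw [card_range]; lia) hb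
  exact ⟨I, by rw [hvoters, card_range], by rwa [card_range] at hI⟩
end
end

section
/- Let μ be a DNS satisfaction function such that for every ε > 0 there exists a cost t > 0 with μ(t) < ε. Then for every δ > 0 there exists a PB instance such that the outcome of Greedy_μ has utilitarian ratio less than δ with respect to μ, and every feasible outcome of that instance satisfying EJR1_μ has utilitarian ratio less than δ with respect to μ. -/
open Finset
open scoped Classical

noncomputable section

/-! Two voters each approve only their own project; one project costs `t ≤ 1/2`, the other costs
the whole budget `1`. Since `μ` is DNS, the cheap project has the higher value, so greedy starts
with it; since its supporter is entitled to half of the budget, EJR1 forces it as well. It excludes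
the expensive project, so in both cases the welfare is `μ t`, while `μ 1` is attainable. -/

theorem IsDNS.monotoneOn {μ : ℝ → ℝ} (hμ : IsDNS μ) : MonotoneOn μ (Set.Ioi 0) :=
  fun s hs t _ hst => hμ.2.1 s t hs hst

theorem exists_mem_Ioc_lt_of_monotoneOn {μ : ℝ → ℝ} {s ε : ℝ} (hμ : MonotoneOn μ (Set.Ioi 0))
    (hs : 0 < s) (hsmall : ∃ t, 0 < t ∧ μ t < ε) : ∃ t ∈ Set.Ioc 0 s, μ t < ε := by
  obtain ⟨t, ht, hμt⟩ := hsmall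
  have hmin : 0 < min t s := lt_min ht hs
  exact ⟨min t s, ⟨hmin, min_le_right t s⟩, (hμ hmin ht (min_le_left t s)).trans_lt hμt⟩

namespace PB

variable {π ν : Type} {I : PB π ν} {μ : ℝ → ℝ} {W : Finset π} {p q : π}

theorem feasibleSet.uw_le_maxUW (hW : I.feasibleSet W) : I.uw μ W ≤ I.maxUW μ :=
  Finset.le_sup' (I.uw μ) (Finset.mem_filter.mpr ⟨Finset.mem_powerset.mpr hW.1, hW.2⟩)

theorem feasibleSet.notMem_of_budget_lt_cost_add_cost (hW : I.feasibleSet W) (hpq : p ≠ q)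
    (hbudget : I.budget < I.cost p + I.cost q) (hp : p ∈ W) : q ∉ W := by
  intro hq
  have hsub : {p, q} ⊆ W := Finset.insert_subset hp (Finset.singleton_subset_iff.mpr hq)
  have hpair : I.cost p + I.cost q ≤ I.costOf W := by
    rw [← Finset.sum_pair hpq]
    exact Finset.sum_le_sum_of_subset_of_nonneg hsub
      fun r hr _ => (I.cost_pos r (hW.1 hr)).le
  exact (hbudget.trans_le hpair).not_ge hW.2

theorem satOf_singleton {i : ν} (hp : p ∈ I.approves i) :
    I.satOf μ i {p} = μ (I.cost p) := by
  rw [satOf, Finset.singleton_inter_of_mem hp, Finset.sum_singleton]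

theorem satOf_eq_zero_of_disjoint {i : ν} (h : Disjoint W (I.approves i)) :
    I.satOf μ i W = 0 := by
  rw [satOf, Finset.disjoint_iff_inter_eq_empty.mp h, Finset.sum_empty]

theorem EJR1.mem_of_cohesive_singleton {N' : Finset ν} (hW : I.EJR1 μ W)
    (hN' : I.cohesive N' {p}) (honly : ∀ i ∈ N', I.approves i ⊆ {p}) : p ∈ W := by
  rcases hW N' {p} hN' with hsub | ⟨i, hi, q, hq, hqW, hgt⟩
  · exact hsub (Finset.mem_singleton_self p)
  · obtain rfl : q = p := Finset.mem_singleton.mp (honly i hi hq)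
    have hdisj : Disjoint W (I.approves i) :=
      (Finset.disjoint_singleton_right.mpr hqW).mono_right (honly i hi)
    rw [satOf_eq_zero_of_disjoint hdisj, satOf_singleton hq, zero_add] at hgt
    exact absurd hgt (lt_irrefl _)

section Greedy

variable [LinearOrder π] {f : π → ℝ} {S : Finset π} {b : ℝ}

theorem pickMax_mem (hS : S.Nonempty) : pickMax f S hS ∈ S :=
  Finset.mem_of_mem_filter _ (Finset.min'_mem _ _)

theorem pickMax_eq (hS : S.Nonempty) (hp : p ∈ S) (hmax : ∀ q ∈ S, f q ≤ f p)
    (hfirst : ∀ q ∈ S, f p ≤ f q → p ≤ q) : pickMax f S hS = p := by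
  refine le_antisymm (Finset.min'_le _ _ (Finset.mem_filter.mpr ⟨hp, hmax⟩))
    (Finset.le_min' _ _ _ fun q hq => ?_)
  obtain ⟨hqS, hqmax⟩ := Finset.mem_filter.mp hq
  exact hfirst q hqS (hqmax p hp)

theorem mem_and_cost_le_of_greedyStep_eq_some (h : I.greedyStep μ S b = some p) :
    p ∈ S ∧ I.cost p ≤ b := by
  unfold greedyStep at h
  split_ifs at h with hne
  obtain rfl := Option.some_injective _ h
  exact Finset.mem_filter.mp (pickMax_mem hne)

theorem greedyStep_eq_some (hp : p ∈ S) (hpb : I.cost p ≤ b)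
    (hmax : ∀ q ∈ S, I.cost q ≤ b → I.projVal μ q ≤ I.projVal μ p)
    (hfirst : ∀ q ∈ S, I.cost q ≤ b → I.projVal μ p ≤ I.projVal μ q → p ≤ q) :
    I.greedyStep μ S b = some p := by
  have hmem : p ∈ S.filter (fun q => I.cost q ≤ b) := Finset.mem_filter.mpr ⟨hp, hpb⟩
  have hne : (S.filter (fun q => I.cost q ≤ b)).Nonempty := ⟨p, hmem⟩
  rw [greedyStep, dif_pos hne, Option.some_inj]
  refine pickMax_eq hne hmem (fun q hq => ?_) fun q hq => ?_
  · exact hmax q (Finset.mem_filter.mp hq).1 (Finset.mem_filter.mp hq).2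
  · exact hfirst q (Finset.mem_filter.mp hq).1 (Finset.mem_filter.mp hq).2

theorem toFinset_greedyAux_subset (k : ℕ) : (I.greedyAux μ k S b).toFinset ⊆ S := by
  induction k generalizing S b with
  | zero => simp [greedyAux]
  | succ k ih =>
    cases hstep : I.greedyStep μ S b with
    | none => simp [greedyAux, hstep]
    | some p =>
      simp only [greedyAux, hstep, List.toFinset_cons]
      exact Finset.insert_subset (mem_and_cost_le_of_greedyStep_eq_some hstep).1
        (ih.trans (Finset.erase_subset p S))

theorem costOf_toFinset_greedyAux_le (k : ℕ) (hb : 0 ≤ b) :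
    I.costOf (I.greedyAux μ k S b).toFinset ≤ b := by
  induction k generalizing S b with
  | zero => simpa [greedyAux, costOf] using hb
  | succ k ih =>
    cases hstep : I.greedyStep μ S b with
    | none => simpa [greedyAux, hstep, costOf] using hb
    | some p =>
      have hcost : I.cost p ≤ b := (mem_and_cost_le_of_greedyStep_eq_some hstep).2
      have hnotMem : p ∉ (I.greedyAux μ k (S.erase p) (b - I.cost p)).toFinset :=
        fun hp => Finset.notMem_erase p S (toFinset_greedyAux_subset k hp)
      simp only [greedyAux, hstep, List.toFinset_cons, costOf, Finset.sum_insert hnotMem]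
      exact le_sub_iff_add_le'.mp (ih (sub_nonneg.mpr hcost))

theorem feasibleSet_greedy : I.feasibleSet (I.greedy μ) :=
  ⟨toFinset_greedyAux_subset _, costOf_toFinset_greedyAux_le _ I.budget_pos.le⟩

theorem mem_greedy_of_forall_projVal_le (hp : p ∈ I.projs)
    (hmax : ∀ q ∈ I.projs, I.projVal μ q ≤ I.projVal μ p)
    (hfirst : ∀ q ∈ I.projs, I.projVal μ p ≤ I.projVal μ q → p ≤ q) : p ∈ I.greedy μ := by
  have hstep : I.greedyStep μ I.projs I.budget = some p :=
    greedyStep_eq_some hp (I.cost_le_budget p hp) (fun q hq _ => hmax q hq)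
      fun q hq _ => hfirst q hq
  obtain ⟨k, hk⟩ := Nat.exists_eq_succ_of_ne_zero (Finset.card_ne_zero_of_mem hp)
  simp [greedy, greedySeq, hk, greedyAux, hstep]

end Greedy

end PB

/-- The instance with budget `1` in which project `0` costs `t`, project `1` costs the whole budget,
and each of the voters `0` and `1` approves exactly the project of the same number. Greedy breaks
ties by the order of `ℕ`, hence in favour of the cheap project `0`. -/
def competingPair (t : Set.Ioc (0 : ℝ) 1) : PB ℕ ℕ where
  projs := {0, 1}
  voters := {0, 1}
  approves i := {i}
  cost p := if p = 0 then t else 1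
  budget := 1
  projs_nonempty := Finset.insert_nonempty 0 {1}
  budget_pos := one_pos
  cost_pos p _ := by
    split_ifs
    exacts [t.2.1, one_pos]
  cost_le_budget p _ := by
    split_ifs
    exacts [t.2.2, le_rfl]
  approves_subset _ hi := Finset.singleton_subset_iff.mpr hi

namespace competingPair

variable {t : Set.Ioc (0 : ℝ) 1} {μ : ℝ → ℝ} {W : Finset ℕ}

theorem supp_eq_singleton {p : ℕ} (hp : p ∈ (competingPair t).projs) :
    (competingPair t).supp p = {p} := by
  ext i
  simp only [PB.supp, competingPair, Finset.mem_filter, Finset.mem_singleton] at hp ⊢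
  exact ⟨fun h => h.2.symm, fun h => ⟨h ▸ hp, h.symm⟩⟩

theorem uw_singleton {p : ℕ} (hp : p ∈ (competingPair t).projs) :
    (competingPair t).uw μ {p} = μ ((competingPair t).cost p) := by
  simp [PB.uw, supp_eq_singleton hp]

theorem projVal_eq {p : ℕ} (hp : p ∈ (competingPair t).projs) :
    (competingPair t).projVal μ p = μ ((competingPair t).cost p) / (competingPair t).cost p := by
  simp [PB.projVal, supp_eq_singleton hp]

theorem zero_mem_greedy (hμ : IsDNS μ) : 0 ∈ (competingPair t).greedy μ := by
  have h0 : 0 ∈ (competingPair t).projs := Finset.mem_insert_self 0 {1}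
  refine PB.mem_greedy_of_forall_projVal_le h0 (fun q hq => ?_) fun q _ _ => Nat.zero_le q
  rw [projVal_eq hq, projVal_eq h0]
  refine hμ.2.2 _ _ t.2.1 ?_
  change (t : ℝ) ≤ if q = 0 then (t : ℝ) else 1
  split_ifs
  exacts [le_rfl, t.2.2]

theorem zero_mem_of_EJR1 (ht : (t : ℝ) ≤ 1 / 2) (hW : (competingPair t).EJR1 μ W) : 0 ∈ W := by
  have hcohesive : (competingPair t).cohesive {0} {0} := by
    refine ⟨by simp [competingPair], by simp [competingPair], by simp [competingPair], ?_⟩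
    simpa [competingPair, PB.costOf] using ht
  refine hW.mem_of_cohesive_singleton hcohesive fun i hi => ?_
  exact Finset.singleton_subset_iff.mpr hi

theorem eq_singleton_zero (hW : (competingPair t).feasibleSet W) (h0 : 0 ∈ W) : W = {0} := by
  have hbudget :
      (competingPair t).budget < (competingPair t).cost 0 + (competingPair t).cost 1 := by
    simpa [competingPair] using t.2.1
  have h1 : 1 ∉ W := hW.notMem_of_budget_lt_cost_add_cost zero_ne_one hbudget h0
  refine Finset.eq_singleton_iff_unique_mem.mpr ⟨h0, fun p hp => ?_⟩
  have hp01 : p = 0 ∨ p = 1 := by simpa [competingPair] using hW.1 hp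
  exact hp01.resolve_right fun hp1 => h1 (hp1 ▸ hp)

theorem apply_one_le_maxUW : μ 1 ≤ (competingPair t).maxUW μ := by
  have hfeasible : (competingPair t).feasibleSet {1} := by
    simp [PB.feasibleSet, PB.costOf, competingPair]
  calc μ 1 = (competingPair t).uw μ {1} :=
        (uw_singleton (hfeasible.1 (Finset.mem_singleton_self 1))).symm
    _ ≤ (competingPair t).maxUW μ := hfeasible.uw_le_maxUW

theorem uw_lt_mul_maxUW {δ : ℝ} (hδ : 0 ≤ δ) (hμt : μ t < δ * μ 1)
    (hW : (competingPair t).feasibleSet W) (h0 : 0 ∈ W) :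
    (competingPair t).uw μ W < δ * (competingPair t).maxUW μ := by
  calc (competingPair t).uw μ W = (competingPair t).uw μ {0} := by rw [eq_singleton_zero hW h0]
    _ = μ t := uw_singleton (hW.1 h0)
    _ < δ * μ 1 := hμt
    _ ≤ δ * (competingPair t).maxUW μ := mul_le_mul_of_nonneg_left apply_one_le_maxUW hδ

end competingPair

/-- For a DNS satisfaction function taking arbitrarily small values, for every
`δ > 0` there is an instance on which Greedy and every feasible EJR1 outcome have utilitarian
ratio less than `δ`. -/
theorem greedy_and_prop_ratio_arbitrarily_bad (μ : ℝ → ℝ) (hDNS : IsDNS μ)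
    (hsmall : ∀ ε : ℝ, 0 < ε → ∃ t : ℝ, 0 < t ∧ μ t < ε) :
    ∀ δ : ℝ, 0 < δ →
      ∃ I : PB ℕ ℕ,
        I.uw μ (I.greedy μ) < δ * I.maxUW μ ∧
        ∀ W : Finset ℕ, I.feasibleSet W → I.EJR1 μ W →
          I.uw μ W < δ * I.maxUW μ := by
  intro δ hδ
  obtain ⟨t, ⟨ht₀, ht⟩, hμt⟩ := exists_mem_Ioc_lt_of_monotoneOn hDNS.monotoneOn one_half_pos
    (hsmall (δ * μ 1) (mul_pos hδ (hDNS.1 1 one_pos)))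
  let cheap : Set.Ioc (0 : ℝ) 1 := ⟨t, ht₀, ht.trans one_half_lt_one.le⟩
  have hbad : ∀ W, (competingPair cheap).feasibleSet W → 0 ∈ W →
      (competingPair cheap).uw μ W < δ * (competingPair cheap).maxUW μ :=
    fun W => competingPair.uw_lt_mul_maxUW hδ.le hμt
  exact ⟨competingPair cheap,
    hbad _ PB.feasibleSet_greedy (competingPair.zero_mem_greedy hDNS),
    fun W hW hEJR1 => hbad W hW (competingPair.zero_mem_of_EJR1 ht hEJR1)⟩
end
end
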